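/- (Kummer evaluation of ₂F₁(1/2,1/2;1;−1) in integral form.) One has (2/π) · ∫₀^{π/2} dθ / √(1 + sin²θ) = Γ(1/4)² / (2π)^{3/2}, where Γ is the Gamma function. (The left-hand side equals the analytic continuation value ₂F₁(1/2, 1/2; 1; −1) via the complete elliptic integral representation.) -/

import Mathlib

open Real

lemma kummer_aux_image : (fun θ : ℝ => Real.sin θ ^ 4) '' Set.Ioo 0 (π/2) = Set.Ioo 0 1 := by
  ext x
  constructor
  · rintro ⟨θ, ⟨h0, h1⟩, rfl⟩
    have hs : 0 < Real.sin θ := Real.sin_pos_of_pos_of_lt_pi h0 (by linarith [Real.pi_pos])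
    have hc : 0 < Real.cos θ := Real.cos_pos_of_mem_Ioo ⟨by linarith, h1⟩
    have h := Real.sin_sq_add_cos_sq θ
    have hlt : Real.sin θ < 1 := by nlinarith
    exact ⟨by positivity, pow_lt_one₀ hs.le hlt (by norm_num)⟩
  · rintro ⟨h0, h1⟩
    have hy0 : 0 < x ^ ((1:ℝ)/4) := Real.rpow_pos_of_pos h0 _
    have hy1 : x ^ ((1:ℝ)/4) < 1 := Real.rpow_lt_one h0.le h1 (by norm_num)
    refine ⟨Real.arcsin (x ^ ((1:ℝ)/4)), ⟨Real.arcsin_pos.2 hy0, Real.arcsin_lt_pi_div_two.2 hy1⟩, ?_⟩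
    simp only
    rw [Real.sin_arcsin (by linarith) hy1.le, ← Real.rpow_natCast, ← Real.rpow_mul h0.le]
    norm_num

lemma kummer_aux_inj : Set.InjOn (fun θ : ℝ => Real.sin θ ^ 4) (Set.Ioo 0 (π/2)) := by
  intro a ha b hb hab
  have ha' : 0 < Real.sin a := Real.sin_pos_of_pos_of_lt_pi ha.1 (by linarith [Real.pi_pos, ha.2])
  have hb' : 0 < Real.sin b := Real.sin_pos_of_pos_of_lt_pi hb.1 (by linarith [Real.pi_pos, hb.2])
  have h : Real.sin a = Real.sin b := (pow_left_inj₀ ha'.le hb'.le (by norm_num)).1 hab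
  exact Real.injOn_sin ⟨by linarith [ha.1, Real.pi_pos], ha.2.le⟩
    ⟨by linarith [hb.1, Real.pi_pos], hb.2.le⟩ h

lemma kummer_aux_integral : ∫ x in Set.Ioo (0:ℝ) 1, x ^ ((1:ℝ)/4 - 1) * (1 - x) ^ ((1:ℝ)/2 - 1)
    = 4 * ∫ θ in (0:ℝ)..(π/2), 1 / Real.sqrt (1 + Real.sin θ ^ 2) := by
  rw [intervalIntegral.integral_of_le (by positivity), MeasureTheory.integral_Ioc_eq_integral_Ioo,
    ← kummer_aux_image, MeasureTheory.integral_image_eq_integral_abs_deriv_smul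
      (f' := fun θ => 4 * Real.sin θ ^ 3 * Real.cos θ) measurableSet_Ioo _ kummer_aux_inj,
    ← MeasureTheory.integral_const_mul]
  · refine MeasureTheory.setIntegral_congr_fun measurableSet_Ioo ?_
    rintro θ ⟨h0, h1⟩
    have hs : 0 < Real.sin θ := Real.sin_pos_of_pos_of_lt_pi h0 (by linarith [Real.pi_pos])
    have hc : 0 < Real.cos θ := Real.cos_pos_of_mem_Ioo ⟨by linarith, h1⟩
    have h := Real.sin_sq_add_cos_sq θ
    have e1 : (Real.sin θ ^ 4) ^ ((1:ℝ)/4 - 1) = (Real.sin θ ^ 3)⁻¹ := by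
      rw [← Real.rpow_natCast, ← Real.rpow_mul hs.le, ← Real.rpow_natCast, ← Real.rpow_neg hs.le]
      norm_num
    have e2 : (1 - Real.sin θ ^ 4) ^ ((1:ℝ)/2 - 1)
        = (Real.cos θ * Real.sqrt (1 + Real.sin θ ^ 2))⁻¹ := by
      have : 1 - Real.sin θ ^ 4 = Real.cos θ ^ 2 * (1 + Real.sin θ ^ 2) := by
        linear_combination (- (1 + Real.sin θ ^ 2)) * h
      rw [this, show (1:ℝ)/2 - 1 = -(1/2) by norm_num, Real.rpow_neg (by positivity),
        ← Real.sqrt_eq_rpow, Real.sqrt_mul (by positivity), Real.sqrt_sq hc.le]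
    have hq : 0 < Real.sqrt (1 + Real.sin θ ^ 2) := Real.sqrt_pos.2 (by positivity)
    simp only [smul_eq_mul]
    rw [e1, e2, abs_of_pos (by positivity)]
    field_simp
  · intro θ _
    have := ((Real.hasDerivAt_sin θ).fun_pow 4).hasDerivWithinAt (s := Set.Ioo 0 (π/2))
    simpa using this

lemma kummer_aux_beta : ∫ x in Set.Ioo (0:ℝ) 1, x ^ ((1:ℝ)/4 - 1) * (1 - x) ^ ((1:ℝ)/2 - 1)
    = Real.Gamma (1/4) * Real.Gamma (1/2) / Real.Gamma (1/4 + 1/2) := by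
  have h := Complex.betaIntegral_eq_Gamma_mul_div ((1/4 : ℝ) : ℂ) ((1/2 : ℝ) : ℂ)
    (by rw [Complex.ofReal_re]; norm_num) (by rw [Complex.ofReal_re]; norm_num)
  rw [← Complex.ofReal_add, Complex.Gamma_ofReal, Complex.Gamma_ofReal, Complex.Gamma_ofReal,
    Complex.betaIntegral, intervalIntegral.integral_of_le (by norm_num),
    MeasureTheory.integral_Ioc_eq_integral_Ioo] at h
  apply Complex.ofReal_injective
  rw [Complex.ofReal_div, Complex.ofReal_mul, ← h, ← integral_complex_ofReal]
  refine MeasureTheory.setIntegral_congr_fun measurableSet_Ioo ?_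
  rintro x ⟨h0, h1⟩
  simp only
  rw [Complex.ofReal_mul, Complex.ofReal_cpow h0.le, Complex.ofReal_cpow (by linarith)]
  push_cast
  rfl

/-- Kummer evaluation of ₂F₁(1/2,1/2;1;−1) in complete-elliptic-integral form. -/
theorem kummer_integral_evaluation :
    (2 / π) * ∫ θ in (0:ℝ)..(π/2), 1 / Real.sqrt (1 + Real.sin θ ^ 2) =
      Real.Gamma (1/4) ^ 2 / (2 * π) ^ ((3:ℝ)/2) := by
  have h := kummer_aux_integral
  rw [kummer_aux_beta, Real.Gamma_one_half_eq] at h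
  have hr := Real.Gamma_mul_Gamma_one_sub (1/4)
  rw [show (1:ℝ) - 1/4 = 1/4 + 1/2 by norm_num, show π * (1/4) = π / 4 by ring,
    Real.sin_pi_div_four] at hr
  have hg : 0 < Real.Gamma (1/4) := Real.Gamma_pos_of_pos (by norm_num)
  have hg' : 0 < Real.Gamma (1/4 + 1/2) := Real.Gamma_pos_of_pos (by norm_num)
  have hp : (2 * π) ^ ((3:ℝ)/2) = 2 * π * (√2 * √π) := by
    rw [show (3:ℝ)/2 = 1 + 1/2 by norm_num, Real.rpow_add (by positivity), Real.rpow_one,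
      ← Real.sqrt_eq_rpow, Real.sqrt_mul (by norm_num)]
  have hI : ∫ θ in (0:ℝ)..(π/2), 1 / Real.sqrt (1 + Real.sin θ ^ 2)
      = Real.Gamma (1/4) * √π / Real.Gamma (1/4 + 1/2) / 4 := by linarith
  have hG : Real.Gamma (1/4 + 1/2) = π / (√2 / 2) / Real.Gamma (1/4) := by
    rw [← hr]; field_simp
  rw [hI, hp, hG]
  have h2 : √2 ^ 2 = 2 := Real.sq_sqrt (by norm_num)
  have hpi : √π ^ 2 = π := Real.sq_sqrt Real.pi_pos.le
  have h2' : 0 < √2 := by positivity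
  have hpi' : 0 < √π := by positivity
  have hpp := Real.pi_pos
  generalize Real.Gamma (1/4) = g at *
  field_simp
  rw [h2, hpi]
  ring
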